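/- Let D_in be a type, φ : D_in → Π i : Fin m, Fin (k i) a valuation function with k i ≤ S for all i (S ≥ 2), fix 1 ≤ γ ≤ m, a category index i₀, and a set E of at most two elements of category i₀. Suppose D_test ⊆ D_in covers every γ-way combination (A, v) whose value at i₀ (if i₀ ∈ A) does not lie in E, and suppose every γ-way combination is realizable in D_in. Then there exists a finite set D' ⊆ D_in with cardinality at most (m choose γ−1) · S^γ such that D_test ∪ D' satisfies full γ-way combinatorial coverage: for every set A ⊆ Fin m of cardinality γ and every assignment v of an element to each i ∈ A, some test case in D_test ∪ D' realizes (A, v). -/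

import Mathlib

/-- If `D_test` covers all γ-way combinations except possibly
those whose value at the refined category `i₀` lies in a set `E` of at most two
elements, and every γ-way combination is realizable, then at most
`(m choose γ-1) * S^γ` additional test cases restore full γ-way coverage. -/
theorem stmt_14 {D_in : Type*} [DecidableEq D_in] (m S γ : ℕ) (hS : 2 ≤ S) (k : Fin m → ℕ)
    (hk : ∀ i, k i ≤ S) (hγ1 : 1 ≤ γ) (hγm : γ ≤ m)
    (φ : D_in → ∀ i : Fin m, Fin (k i))
    (i₀ : Fin m) (E : Finset (Fin (k i₀))) (hE : E.card ≤ 2)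
    (D_test : Finset D_in)
    (hcov : ∀ A : Finset (Fin m), A.card = γ → ∀ v : ∀ i : A, Fin (k i),
      (∀ h : i₀ ∈ A, v ⟨i₀, h⟩ ∉ E) →
      ∃ x ∈ D_test, ∀ i : A, φ x i = v i)
    (hreal : ∀ A : Finset (Fin m), A.card = γ → ∀ v : ∀ i : A, Fin (k i),
      ∃ x : D_in, ∀ i : A, φ x i = v i) :
    ∃ D' : Finset D_in,
      D'.card ≤ Nat.choose m (γ - 1) * S ^ γ ∧
      ∀ A : Finset (Fin m), A.card = γ → ∀ v : ∀ i : A, Fin (k i),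
        ∃ x ∈ D_test ∪ D', ∀ i : A, φ x i = v i := by
  classical
  choose f hf using hreal
  let g : Finset (Fin m) → Finset D_in := fun B =>
    if h : (insert i₀ B).card = γ then
      (Finset.univ : Finset (∀ i : (insert i₀ B : Finset (Fin m)), Fin (k i))).image
        (fun v => f (insert i₀ B) h v)
    else ∅
  refine ⟨(Finset.powersetCard (γ - 1) (Finset.univ : Finset (Fin m))).biUnion g, ?_, ?_⟩
  · have h1 := Finset.card_biUnion_le_card_mul
      (Finset.powersetCard (γ - 1) (Finset.univ : Finset (Fin m))) g (S ^ γ) (by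
        intro B _
        by_cases h : (insert i₀ B).card = γ
        · simp only [g, dif_pos h]
          refine Finset.card_image_le.trans ?_
          rw [Finset.card_univ, Fintype.card_pi]
          refine (Finset.prod_le_pow_card _ _ S ?_).trans ?_
          · intro i _
            simpa using hk i
          · rw [Finset.card_univ, Fintype.card_coe, h]
        · simp only [g, dif_neg h]
          simp)
    simpa [Finset.card_powersetCard] using h1
  · intro A hA v
    by_cases hi : i₀ ∈ A
    · obtain ⟨B, hB, rfl⟩ : ∃ B, i₀ ∉ B ∧ insert i₀ B = A :=
        ⟨A.erase i₀, Finset.notMem_erase _ _, Finset.insert_erase hi⟩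
      refine ⟨f _ hA v, Finset.mem_union_right _ ?_, hf _ hA v⟩
      rw [Finset.mem_biUnion]
      refine ⟨B, ?_, ?_⟩
      · rw [Finset.mem_powersetCard]
        refine ⟨Finset.subset_univ _, ?_⟩
        rw [Finset.card_insert_of_notMem hB] at hA
        omega
      · simp only [g, dif_pos hA]
        exact Finset.mem_image_of_mem _ (Finset.mem_univ v)
    · obtain ⟨x, hx, hx'⟩ := hcov A hA v (fun h => absurd h hi)
      exact ⟨x, Finset.mem_union_left _ hx, hx'⟩
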